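/- Let L ⊆ (Fin l → ZMod 2), M ⊆ (Fin m → ZMod 2), and N ⊆ (Fin k → ZMod 2) be binary matroids, let β, β' : M → N be matroid homomorphisms that are adjacent in the recolouring graph mCol(M, N), and let α : L → M be a matroid homomorphism. Then β ∘ α and β' ∘ α are joined by a walk in mCol(L, N). -/

import Mathlib

/-- A circuit of a binary matroid with point set `E`: a minimal nonempty subset summing to 0. -/
def IsCircuit {P : Type*} [AddCommGroup P] (E Z : Finset P) : Prop :=
  Z ⊆ E ∧ Z.Nonempty ∧ ∑ e ∈ Z, e = 0 ∧
    ∀ Z' ⊆ Z, Z'.Nonempty → ∑ e ∈ Z', e = 0 → Z' = Z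

/-- A cocircuit: a minimal nonempty subset meeting every circuit evenly. -/
def IsCocircuit {P : Type*} [AddCommGroup P] [DecidableEq P] (E C : Finset P) : Prop :=
  C ⊆ E ∧ C.Nonempty ∧ (∀ Z, IsCircuit E Z → Even (C ∩ Z).card) ∧
    ∀ C' ⊆ C, C'.Nonempty → (∀ Z, IsCircuit E Z → Even (C' ∩ Z).card) → C' = C

/-- A matroid homomorphism from the matroid on `E` to the matroid on `F`. -/
def IsMHom {P Q : Type*} [AddCommGroup P] [AddCommGroup Q]
    (E : Finset P) (F : Finset Q) (τ : P → Q) : Prop :=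
  (∀ e ∈ E, τ e ∈ F) ∧ ∀ Z, IsCircuit E Z → ∑ e ∈ Z, τ e = 0

/-- Adjacency in the recolouring graph: the maps differ exactly on a cocircuit. -/
def MAdj {P Q : Type*} [AddCommGroup P] [AddCommGroup Q] [DecidableEq P]
    (E : Finset P) (τ τ' : P → Q) : Prop :=
  ∃ C, IsCocircuit E C ∧ ∀ e ∈ E, (τ e ≠ τ' e ↔ e ∈ C)

/-- One step of a walk in `mCol(E,F)`: both maps are homomorphisms and they are
equal (as maps on `E`) or adjacent. -/
def MStep {P Q : Type*} [AddCommGroup P] [AddCommGroup Q] [DecidableEq P]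
    (E : Finset P) (F : Finset Q) (τ τ' : P → Q) : Prop :=
  IsMHom E F τ ∧ IsMHom E F τ' ∧ ((∀ e ∈ E, τ e = τ' e) ∨ MAdj E τ τ')

/-- Joined by a walk in the recolouring graph `mCol(E,F)`. -/
def MWalk {P Q : Type*} [AddCommGroup P] [AddCommGroup Q] [DecidableEq P]
    (E : Finset P) (F : Finset Q) : (P → Q) → (P → Q) → Prop :=
  Relation.ReflTransGen (MStep E F)

/-- The indicator vector of a vertex. -/
def ind {V : Type*} [DecidableEq V] (u : V) : V → ZMod 2 := Pi.single u 1

/-- The decision graph of a set `F` of nonzero vectors. -/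
def decisionGraph {m : ℕ} (F : Finset (Fin m → ZMod 2)) : SimpleGraph (Fin m → ZMod 2) where
  Adj v w := v + w ∈ F ∧ v ≠ w
  symm := by
    constructor
    intro v w h
    exact ⟨by rw [add_comm]; exact h.1, h.2.symm⟩
  loopless := by
    constructor
    intro v h
    exact h.2 rfl

/-- The weight of a vector: its number of nonzero coordinates. -/
def wt {n : ℕ} (e : Fin n → ZMod 2) : ℕ := (Finset.univ.filter fun i => e i ≠ 0).card

/-!
Over `ZMod 2`, let `δ = β' - β`. For every linear functional `ψ`, the support of `ψ ∘ δ` meets all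
circuits evenly and lies in the cocircuit where `β` and `β'` differ, so by minimality it is empty
or that whole cocircuit. Since functionals separate points, `δ` is a constant `v` on the cocircuit.

Pulling back along `α`, the maps `β ∘ α` and `β' ∘ α` differ by `v` wherever they differ. The set
where they differ therefore meets every circuit evenly, hence contains a cocircuit; switching from
the first map to the second on that cocircuit adds `v` there, which is again a homomorphism, and
leaves a smaller set to switch.
-/

open Finset

section Parity

variable {P Q R : Type*} [AddCommGroup Q] [Module (ZMod 2) Q]

lemma nsmul_eq_ite_odd (n : ℕ) (x : Q) : n • x = if Odd n then x else 0 := by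
  rw [← Nat.cast_smul_eq_nsmul (ZMod 2), CharTwo.natCast_eq_ite]
  split_ifs <;> simp_all [← Nat.not_even_iff_odd]

lemma nsmul_eq_zero_iff_even {x : Q} (hx : x ≠ 0) (n : ℕ) : n • x = 0 ↔ Even n := by
  simp [nsmul_eq_ite_odd, hx]

lemma sum_comp_eq_sum_odd_fibers [DecidableEq P] (s : Finset R) (f : P → Q) (g : R → P) :
    ∑ e ∈ s, f (g e) = ∑ x ∈ s.image g with Odd #{e ∈ s | g e = x}, f x := by
  rw [sum_comp, sum_filter]
  exact sum_congr rfl fun x _ ↦ nsmul_eq_ite_odd _ (f x)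

end Parity

/-- `f` is a tension on the matroid with point set `E`: its values sum to zero around each circuit.
It is the condition in `IsMHom` that does not mention the target matroid. -/
def IsTension {P Q : Type*} [AddCommGroup P] [AddCommGroup Q] (E : Finset P) (f : P → Q) : Prop :=
  ∀ Z, IsCircuit E Z → ∑ e ∈ Z, f e = 0

/-- `C` is a cocycle of the matroid with point set `E`: a set of points meeting each circuit in an
even number of points. The cocircuits are the minimal nonempty cocycles. -/
def IsCocycle {P : Type*} [AddCommGroup P] [DecidableEq P] (E C : Finset P) : Prop :=
  C ⊆ E ∧ ∀ Z, IsCircuit E Z → Even #(C ∩ Z)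

section Minimality

variable {P : Type*} [AddCommGroup P] {E C D Z : Finset P}

lemma exists_isCircuit_subset (hZE : Z ⊆ E) (hZ : Z.Nonempty) (hsum : ∑ e ∈ Z, e = 0) :
    ∃ Y ⊆ Z, IsCircuit E Y := by
  obtain ⟨Y, hYZ, ⟨hY, hYsum⟩, hmin⟩ := exists_minimal_le_of_wellFoundedLT
    (fun Y : Finset P ↦ Y.Nonempty ∧ ∑ e ∈ Y, e = 0) Z ⟨hZ, hsum⟩
  exact ⟨Y, hYZ, hYZ.trans hZE, hY, hYsum,
    fun X hXY hX hXsum ↦ hXY.antisymm (hmin ⟨hX, hXsum⟩ hXY)⟩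

variable [DecidableEq P]

lemma IsCocycle.exists_isCocircuit_subset (hD : IsCocycle E D) (hne : D.Nonempty) :
    ∃ C ⊆ D, IsCocircuit E C := by
  obtain ⟨C, hCD, ⟨hC, hCeven⟩, hmin⟩ := exists_minimal_le_of_wellFoundedLT
    (fun C : Finset P ↦ C.Nonempty ∧ ∀ Z, IsCircuit E Z → Even #(C ∩ Z)) D ⟨hne, hD.2⟩
  exact ⟨C, hCD, hCD.trans hD.1, hC, hCeven,
    fun B hBC hB hBeven ↦ hBC.antisymm (hmin ⟨hB, hBeven⟩ hBC)⟩

lemma IsCocircuit.isCocycle (hC : IsCocircuit E C) : IsCocycle E C :=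
  ⟨hC.1, hC.2.2.1⟩

lemma IsCocircuit.eq_of_isCocycle_subset (hC : IsCocircuit E C) (hD : IsCocycle E D)
    (hDC : D ⊆ C) (hne : D.Nonempty) : D = C :=
  hC.2.2.2 D hDC hne hD.2

end Minimality

namespace IsTension

variable {P Q R : Type*} [AddCommGroup P] [AddCommGroup Q] [AddCommGroup R]
  {E C : Finset P} {f g : P → Q}

lemma add (hf : IsTension E f) (hg : IsTension E g) : IsTension E (f + g) := fun Z hZ ↦ by
  simp [sum_add_distrib, hf Z hZ, hg Z hZ]

lemma sub (hf : IsTension E f) (hg : IsTension E g) : IsTension E (f - g) := fun Z hZ ↦ by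
  simp [hf Z hZ, hg Z hZ]

lemma map (hf : IsTension E f) (φ : Q →+ R) : IsTension E (φ ∘ f) := fun Z hZ ↦ by
  simp [← map_sum, hf Z hZ]

lemma congr (hf : IsTension E f) (h : ∀ e ∈ E, g e = f e) : IsTension E g := fun Z hZ ↦
  (sum_congr rfl fun e he ↦ h e (hZ.1 he)).trans (hf Z hZ)

lemma sum_cycle (hf : IsTension E f) {Z : Finset P} (hZE : Z ⊆ E) (hZ : ∑ e ∈ Z, e = 0) :
    ∑ e ∈ Z, f e = 0 := by
  classical
  induction Z using Finset.strongInduction with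
  | H Z ih =>
    obtain rfl | hne := Z.eq_empty_or_nonempty
    · exact sum_empty
    obtain ⟨Y, hYZ, hY⟩ := exists_isCircuit_subset hZE hne hZ
    have hrest : ∑ e ∈ Z \ Y, e = 0 := by
      rwa [← sum_sdiff hYZ, hY.2.2.1, add_zero] at hZ
    rw [← sum_sdiff hYZ, hf Y hY, add_zero]
    exact ih _ (sdiff_ssubset hYZ hY.2.1) (sdiff_subset.trans hZE) hrest

-- Points of a circuit of `L` with the same image cancel in pairs, and the points of `E` hit an odd
-- number of times form a cycle.
lemma comp [Module (ZMod 2) P] [Module (ZMod 2) Q] {L : Finset R} {α : R → P}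
    (hf : IsTension E f) (hα : IsTension L α) (hmaps : ∀ e ∈ L, α e ∈ E) :
    IsTension L (f ∘ α) := by
  classical
  intro Z hZ
  have hcycle := (sum_comp_eq_sum_odd_fibers Z id α).symm.trans (hα Z hZ)
  refine (sum_comp_eq_sum_odd_fibers Z f α).trans (hf.sum_cycle ?_ hcycle)
  exact (filter_subset _ _).trans (image_subset_iff.2 fun e he ↦ hmaps e (hZ.1 he))

variable [DecidableEq P]

lemma of_isCocycle [Module (ZMod 2) Q] (hC : IsCocycle E C) (v : Q) :
    IsTension E fun e ↦ if e ∈ C then v else 0 := fun Z hZ ↦ by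
  rw [sum_ite_mem, sum_const, inter_comm, nsmul_eq_ite_odd,
    if_neg (Nat.not_odd_iff_even.2 (hC.2 Z hZ))]

lemma isCocycle_support [Module (ZMod 2) Q] [DecidableEq Q] (hf : IsTension E f) {v : Q}
    (hv : v ≠ 0) (hconst : ∀ e ∈ E, f e ≠ 0 → f e = v) : IsCocycle E {e ∈ E | f e ≠ 0} := by
  refine ⟨filter_subset _ _, fun Z hZ ↦ ?_⟩
  have hsupport : {e ∈ E | f e ≠ 0} ∩ Z = {e ∈ Z | f e ≠ 0} := by
    rw [filter_inter, inter_eq_right.2 hZ.1]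
  rw [hsupport, ← nsmul_eq_zero_iff_even hv]
  calc #{e ∈ Z | f e ≠ 0} • v
    _ = ∑ e ∈ Z with f e ≠ 0, f e := by
      rw [← sum_const]
      refine sum_congr rfl fun e he ↦ ?_
      obtain ⟨heZ, hne⟩ := mem_filter.1 he
      exact (hconst e (hZ.1 heZ) hne).symm
    _ = ∑ e ∈ Z, f e := sum_filter_ne_zero Z
    _ = 0 := hf Z hZ

lemma apply_ne_zero_of_isCocircuit {f : P → ZMod 2} (hf : IsTension E f) (hC : IsCocircuit E C)
    (hsupport : ∀ e ∈ E, f e ≠ 0 → e ∈ C) {x y : P} (hx : x ∈ C) (hy : y ∈ C) (hfx : f x ≠ 0) :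
    f y ≠ 0 := by
  have hcocycle : IsCocycle E {e ∈ E | f e ≠ 0} :=
    hf.isCocycle_support one_ne_zero fun e _ ↦ Fin.eq_one_of_ne_zero (f e)
  have hsubset : {e ∈ E | f e ≠ 0} ⊆ C := fun e he ↦
    hsupport e (mem_filter.1 he).1 (mem_filter.1 he).2
  have hne : {e ∈ E | f e ≠ 0}.Nonempty := ⟨x, mem_filter.2 ⟨hC.1 hx, hfx⟩⟩
  rw [← hC.eq_of_isCocycle_subset hcocycle hsubset hne] at hy
  exact (mem_filter.1 hy).2

lemma eq_of_mem_isCocircuit [Module (ZMod 2) Q] (hf : IsTension E f) (hC : IsCocircuit E C)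
    (hsupport : ∀ e ∈ E, f e ≠ 0 → e ∈ C) {x y : P} (hx : x ∈ C) (hy : y ∈ C) : f x = f y := by
  refine Module.eval_apply_injective (ZMod 2) (LinearMap.ext fun ψ ↦ ?_)
  have hψ : IsTension E (ψ ∘ f) := hf.map ψ.toAddMonoidHom
  have hψsupport : ∀ e ∈ E, ψ (f e) ≠ 0 → e ∈ C := fun e he hne ↦
    hsupport e he fun h ↦ hne (by rw [h, map_zero])
  have hiff : ψ (f x) ≠ 0 ↔ ψ (f y) ≠ 0 :=
    ⟨hψ.apply_ne_zero_of_isCocircuit hC hψsupport hx hy,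
      hψ.apply_ne_zero_of_isCocircuit hC hψsupport hy hx⟩
  have eq_of_ne_zero_iff : ∀ a b : ZMod 2, (a ≠ 0 ↔ b ≠ 0) → a = b := by decide
  exact eq_of_ne_zero_iff _ _ hiff

end IsTension

namespace IsMHom

variable {P Q R : Type*} [AddCommGroup P] [AddCommGroup Q] [AddCommGroup R]
  {E : Finset P} {F : Finset Q} {τ τ' : P → Q}

lemma isTension (hτ : IsMHom E F τ) : IsTension E τ :=
  hτ.2

variable [Module (ZMod 2) Q]

lemma comp [Module (ZMod 2) P] {L : Finset R} {α : R → P} (hτ : IsMHom E F τ)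
    (hα : IsMHom L E α) : IsMHom L F (τ ∘ α) :=
  ⟨fun e he ↦ hτ.1 _ (hα.1 e he), hτ.isTension.comp hα.isTension hα.1⟩

variable [DecidableEq P]

lemma piecewise {C : Finset P} (hτ : IsMHom E F τ) (hτ' : IsMHom E F τ') (hC : IsCocycle E C)
    {v : Q} (hdiff : ∀ e ∈ C, τ' e - τ e = v) : IsMHom E F (C.piecewise τ' τ) := by
  refine ⟨fun e he ↦ C.piecewise_cases τ' τ (· ∈ F) (hτ'.1 e he) (hτ.1 e he), ?_⟩
  refine (hτ.isTension.add (.of_isCocycle hC v)).congr fun e _ ↦ ?_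
  by_cases heC : e ∈ C
  · simp [heC, ← hdiff e heC]
  · simp [heC]

lemma exists_mStep_piecewise (hτ : IsMHom E F τ) (hτ' : IsMHom E F τ') {v : Q}
    (hdiff : ∀ e ∈ E, τ' e ≠ τ e → τ' e - τ e = v) {d : P} (hd : d ∈ E) (hne : τ' d ≠ τ d) :
    ∃ C, IsCocircuit E C ∧ (∀ e ∈ C, τ' e ≠ τ e) ∧ MStep E F τ (C.piecewise τ' τ) := by
  classical
  have hv : v ≠ 0 := hdiff d hd hne ▸ sub_ne_zero.2 hne
  have hcocycle : IsCocycle E {e ∈ E | τ' e - τ e ≠ 0} :=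
    (hτ'.isTension.sub hτ.isTension).isCocycle_support hv
      fun e he h ↦ hdiff e he (sub_ne_zero.1 h)
  obtain ⟨C, hCsub, hC⟩ :=
    hcocycle.exists_isCocircuit_subset ⟨d, mem_filter.2 ⟨hd, sub_ne_zero.2 hne⟩⟩
  have hneC : ∀ e ∈ C, τ' e ≠ τ e := fun e he ↦ sub_ne_zero.1 (mem_filter.1 (hCsub he)).2
  have hσ : IsMHom E F (C.piecewise τ' τ) :=
    hτ.piecewise hτ' hC.isCocycle fun e he ↦ hdiff e (hC.1 he) (hneC e he)
  refine ⟨C, hC, hneC, hτ, hσ, .inr ⟨C, hC, fun e _ ↦ ?_⟩⟩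
  by_cases heC : e ∈ C
  · simpa [heC] using (hneC e heC).symm
  · simp [heC]

lemma mWalk_of_sub_eq (hτ : IsMHom E F τ) (hτ' : IsMHom E F τ') {v : Q}
    (hdiff : ∀ e ∈ E, τ' e ≠ τ e → τ' e - τ e = v) : MWalk E F τ τ' := by
  classical
  induction hD : {e ∈ E | τ' e ≠ τ e} using Finset.strongInduction generalizing τ with
  | H D ih =>
    obtain hagree | ⟨d, hd, hne⟩ : (∀ e ∈ E, τ e = τ' e) ∨ ∃ e ∈ E, τ' e ≠ τ e := by grind
    · exact .single ⟨hτ, hτ', .inl hagree⟩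
    obtain ⟨C, hC, hneC, hstep⟩ := hτ.exists_mStep_piecewise hτ' hdiff hd hne
    have hCD : C ⊆ D := hD ▸ fun e he ↦ mem_filter.2 ⟨hC.1 he, hneC e he⟩
    have hshrink : {e ∈ E | τ' e ≠ C.piecewise τ' τ e} = D \ C := by
      ext e
      by_cases heC : e ∈ C <;> simp [heC, ← hD]
    refine .head hstep (ih _ (sdiff_ssubset hCD hC.2.1) hstep.2.1 (fun e he ↦ ?_) hshrink)
    by_cases heC : e ∈ C
    · simp [heC]
    · simpa [heC] using hdiff e he

end IsMHom

theorem stmt5_general {R P Q : Type*} [AddCommGroup R] [AddCommGroup P] [AddCommGroup Q]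
    [Module (ZMod 2) P] [Module (ZMod 2) Q] [DecidableEq R] [DecidableEq P]
    {L : Finset R} {M : Finset P} {N : Finset Q} {β β' : P → Q} {α : R → P}
    (hβ : IsMHom M N β) (hβ' : IsMHom M N β') (hα : IsMHom L M α) (hadj : MAdj M β β') :
    MWalk L N (β ∘ α) (β' ∘ α) := by
  obtain ⟨C, hC, hdiff⟩ := hadj
  obtain ⟨c, hc⟩ := hC.2.1
  have hsupport : ∀ e ∈ M, (β' - β) e ≠ 0 → e ∈ C := fun e he hne ↦
    (hdiff e he).1 (sub_ne_zero.1 hne).symm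
  have hconst : ∀ e ∈ C, (β' - β) e = (β' - β) c := fun e he ↦
    (hβ'.isTension.sub hβ.isTension).eq_of_mem_isCocircuit hC hsupport he hc
  refine (hβ.comp hα).mWalk_of_sub_eq (hβ'.comp hα) (v := (β' - β) c) fun e he hne ↦ ?_
  exact hconst (α e) ((hdiff _ (hα.1 e he)).1 hne.symm)

theorem stmt5 (l m k : ℕ) (L : Finset (Fin l → ZMod 2)) (M : Finset (Fin m → ZMod 2))
    (N : Finset (Fin k → ZMod 2))
    (β β' : (Fin m → ZMod 2) → (Fin k → ZMod 2))
    (α : (Fin l → ZMod 2) → (Fin m → ZMod 2))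
    (hβ : IsMHom M N β) (hβ' : IsMHom M N β') (hα : IsMHom L M α)
    (hadj : MAdj M β β') :
    MWalk L N (β ∘ α) (β' ∘ α) :=
  stmt5_general hβ hβ' hα hadj
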